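/- arXiv:1401.0903 — 2 statements merged into one kernel-verified Lean document; each statement's English description precedes it below -/
import Mathlib

section
/- Let Φ be a Hawkes kernel matrix satisfying hypothesis (H), Ψ = Σ_{k=1}^∞ Φ^{⋆k}, Σ a diagonal D×D matrix with strictly positive diagonal entries, and let g be the associated conditional-expectation matrix. Then for every purely imaginary z (Re(z) = 0), the matrix I + ĝ(z) is invertible and its inverse is given explicitly by (I + ĝ(z))^{−1} = Σ (I − Φ̂(−z)ᵀ) Σ^{−1} (I − Φ̂(z)). -/
open MeasureTheory Matrix Filter Set

/-- Entrywise matrix convolution: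
`(A ⋆ B)^{ij}(t) = ∑_{k} ∫ A^{ik}(s) B^{kj}(t - s) ds`. -/
noncomputable def mconv (D : ℕ) (A B : ℝ → Matrix (Fin D) (Fin D) ℝ) :
    ℝ → Matrix (Fin D) (Fin D) ℝ :=
  fun t => Matrix.of fun i j => ∑ k : Fin D, ∫ s : ℝ, A s i k * B (t - s) k j

/-- `mconvIter D Φ k` is the `(k+1)`-fold matrix convolution `Φ^{⋆(k+1)}`. -/
noncomputable def mconvIter (D : ℕ) (Φ : ℝ → Matrix (Fin D) (Fin D) ℝ) :
    ℕ → ℝ → Matrix (Fin D) (Fin D) ℝ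
  | 0 => Φ
  | (k + 1) => mconv D Φ (mconvIter D Φ k)

/-- `Ψ = ∑_{k=1}^∞ Φ^{⋆k}`, defined entrywise as a pointwise sum. -/
noncomputable def hawkesPsi (D : ℕ) (Φ : ℝ → Matrix (Fin D) (Fin D) ℝ) :
    ℝ → Matrix (Fin D) (Fin D) ℝ :=
  fun t => Matrix.of fun i j => ∑' k : ℕ, mconvIter D Φ k t i j

/-- The matrix `‖Φ‖` of `L¹` norms: `‖Φ‖^{ij} = ∫ φ^{ij}(t) dt` (entries nonnegative). -/
noncomputable def kernelNorm (D : ℕ) (Φ : ℝ → Matrix (Fin D) (Fin D) ℝ) :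
    Matrix (Fin D) (Fin D) ℝ :=
  Matrix.of fun i j => ∫ t : ℝ, Φ t i j

/-- A Hawkes kernel matrix: measurable, nonnegative, integrable and causal entries. -/
def IsHawkesKernel (D : ℕ) (Φ : ℝ → Matrix (Fin D) (Fin D) ℝ) : Prop :=
  (∀ i j, Measurable fun t => Φ t i j) ∧
  (∀ t, ∀ i j, 0 ≤ Φ t i j) ∧
  (∀ i j, Integrable fun t => Φ t i j) ∧
  (∀ t < (0 : ℝ), Φ t = 0)

/-- Hypothesis (H): the spectral radius of `‖Φ‖` is strictly smaller than 1. -/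
def HypothesisH (D : ℕ) (Φ : ℝ → Matrix (Fin D) (Fin D) ℝ) : Prop :=
  spectralRadius ℂ ((kernelNorm D Φ).map Complex.ofReal) < 1

/-- `q(t) = Σ Ψ(-t)ᵀ Σ⁻¹`. -/
noncomputable def hawkesQ (D : ℕ) (Φ : ℝ → Matrix (Fin D) (Fin D) ℝ)
    (S : Matrix (Fin D) (Fin D) ℝ) : ℝ → Matrix (Fin D) (Fin D) ℝ :=
  fun t => S * (hawkesPsi D Φ (-t))ᵀ * S⁻¹

/-- The conditional-expectation matrix
`g(t) = Ψ(t) + Σ Ψ(-t)ᵀ Σ⁻¹ + (Ψ ⋆ q)(t)`. -/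
noncomputable def hawkesG (D : ℕ) (Φ : ℝ → Matrix (Fin D) (Fin D) ℝ)
    (S : Matrix (Fin D) (Fin D) ℝ) : ℝ → Matrix (Fin D) (Fin D) ℝ :=
  fun t => hawkesPsi D Φ t + hawkesQ D Φ S t +
    mconv D (hawkesPsi D Φ) (hawkesQ D Φ S) t

/-- Entrywise Laplace transform `F̂(z) = ∫ F(t) e^{zt} dt`. -/
noncomputable def mlaplace (D : ℕ) (F : ℝ → Matrix (Fin D) (Fin D) ℝ) (z : ℂ) :
    Matrix (Fin D) (Fin D) ℂ :=
  Matrix.of fun i j => ∫ t : ℝ, (F t i j : ℂ) * Complex.exp (z * t)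

/-!
Weight a kernel by `e^{zt}`: convolution is compatible with this weighting, so the Laplace transform
sends `⋆` to the matrix product and the matrix of weighted `L¹` norms of `Φ^{⋆k}` is dominated
entrywise by the `k`-th power of that of `Φ`. If the latter matrix has spectral radius less than
one, then `Ψ` converges and `1 + Ψ̂(z) = ∑ Φ̂(z)^k = (1 - Φ̂(z))⁻¹`. The definition of `g` says
precisely that `1 + ĝ = (1 + Ψ̂)(1 + q̂)`, where `1 + q̂(z) = Σ (1 + Ψ̂(-z))ᵀ Σ⁻¹`; it remains to
invert both factors. On the imaginary axis the weight has modulus one and, for a nonnegative kernel,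
the spectral condition is hypothesis (H).
-/

open scoped Convolution ENNReal

section LinearAlgebra

variable {n : Type*} [Fintype n] [DecidableEq n]

lemma map_nonsing_inv {K L : Type*} [Field K] [Field L] (f : K →+* L) (M : Matrix n n K) :
    M⁻¹.map f = (M.map f)⁻¹ := by
  rw [inv_def, inv_def, Ring.inverse_eq_inv', Ring.inverse_eq_inv', ← f.mapMatrix_apply M,
    ← f.map_det, ← f.map_adjugate, ← map_inv₀, f.mapMatrix_apply]
  ext i j
  simp

lemma isUnit_of_isDiag {K : Type*} [Field K] {M : Matrix n n K} (hM : M.IsDiag)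
    (hne : ∀ i, M i i ≠ 0) : IsUnit M := by
  rw [← hM.diagonal_diag, isUnit_diagonal, Pi.isUnit_iff]
  exact fun i => (hne i).isUnit

end LinearAlgebra

section SpectralRadius

lemma summable_norm_pow_of_spectralRadius_lt_one {A : Type*} [NormedRing A] [NormedAlgebra ℂ A]
    [CompleteSpace A] {a : A} (ha : spectralRadius ℂ a < 1) : Summable fun k : ℕ => ‖a ^ k‖ := by
  obtain ⟨r, har, hr⟩ := ENNReal.lt_iff_exists_nnreal_btwn.1 ha
  refine Summable.of_norm_bounded_eventually_nat
    (summable_geometric_of_lt_one r.coe_nonneg (by exact_mod_cast hr)) ?_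
  have hroot := (spectrum.pow_nnnorm_pow_one_div_tendsto_nhds_spectralRadius a).eventually_lt_const
    har
  filter_upwards [hroot, eventually_gt_atTop 0] with k hk hk0
  have hpow : (‖a ^ k‖₊ : ℝ≥0∞) ≤ (r : ℝ≥0∞) ^ k := by
    rw [← ENNReal.rpow_natCast, ← ENNReal.rpow_inv_le_iff (by positivity), ← one_div]
    exact hk.le
  rw [norm_norm]
  exact_mod_cast hpow

attribute [local instance] Matrix.linftyOpNormedRing Matrix.linftyOpNormedAlgebra in
lemma summable_pow_apply_of_spectralRadius_lt_one {n : Type*} [Fintype n] [DecidableEq n]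
    {N : Matrix n n ℝ} (hN : spectralRadius ℂ (N.map Complex.ofReal) < 1) (i j : n) :
    Summable fun k : ℕ => (N ^ k) i j := by
  have hpow : Summable fun k : ℕ => (N.map Complex.ofReal) ^ k :=
    (summable_norm_pow_of_spectralRadius_lt_one hN).of_norm
  have hentry := Pi.summable.1 (Pi.summable.1 hpow i) j
  refine Complex.summable_ofReal.1 (hentry.congr fun k => ?_)
  exact (congrFun₂ (map_pow Complex.ofRealHom.mapMatrix N k) i j).symm

end SpectralRadius

section Integration

lemma integrable_tsum_of_summable_integral_norm {α E ι : Type*} [MeasurableSpace α]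
    {μ : Measure α} [NormedAddCommGroup E] [CompleteSpace E] [Countable ι]
    {F : ι → α → E} (hF : ∀ i, Integrable (F i) μ) (hsum : Summable fun i => ∫ a, ‖F i a‖ ∂μ) :
    Integrable (fun a => ∑' i, F i a) μ := by
  have hL1 : ∑' i, ‖(hF i).toL1 (F i)‖ₑ ≠ ∞ := by
    simpa only [tsum_enorm_ne_top_iff_summable_norm, L1.norm_of_fun_eq_integral_norm] using hsum
  refine (L1.integrable_coeFn (∑' i, (hF i).toL1 (F i))).congr ?_
  filter_upwards [Lp.hasSum_coeFn_tsum hL1, ae_all_iff.2 fun i => (hF i).coeFn_toL1]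
    with a hsum_a hF_a
  rw [← hsum_a.tsum_eq]
  exact tsum_congr hF_a

lemma integral_norm_convolution_le {𝕜 G E E' F : Type*} [NontriviallyNormedField 𝕜]
    [NormedAddCommGroup E] [NormedAddCommGroup E'] [NormedAddCommGroup F]
    [NormedSpace 𝕜 E] [NormedSpace 𝕜 E'] [NormedSpace 𝕜 F] [NormedSpace ℝ F]
    [AddCommGroup G] [MeasurableSpace G] [MeasurableAdd₂ G] [MeasurableNeg G] {μ : Measure G}
    [SFinite μ] [μ.IsAddRightInvariant] (L : E →L[𝕜] E' →L[𝕜] F) {f : G → E} {g : G → E'}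
    (hf : Integrable f μ) (hg : Integrable g μ) :
    ∫ x, ‖(f ⋆[L, μ] g) x‖ ∂μ ≤ ‖L‖ * ((∫ x, ‖f x‖ ∂μ) * ∫ x, ‖g x‖ ∂μ) := by
  have hfg : Integrable ((fun x => ‖f x‖) ⋆[ContinuousLinearMap.mul ℝ ℝ, μ] fun x => ‖g x‖) μ :=
    hf.norm.integrable_convolution _ hg.norm
  calc ∫ x, ‖(f ⋆[L, μ] g) x‖ ∂μ
      ≤ ∫ x, ‖L‖ * ((fun x => ‖f x‖) ⋆[ContinuousLinearMap.mul ℝ ℝ, μ] fun x => ‖g x‖) x ∂μ := by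
        refine integral_mono_of_nonneg (ae_of_all _ fun _ => norm_nonneg _) (hfg.const_mul _) ?_
        filter_upwards [hf.norm.ae_convolution_exists (ContinuousLinearMap.mul ℝ ℝ) hg.norm]
          with x hx
        rw [convolution_def, convolution_def, ← integral_const_mul]
        refine norm_integral_le_of_norm_le (hx.integrable.const_mul _) (ae_of_all _ fun t => ?_)
        rw [ContinuousLinearMap.mul_apply', ← mul_assoc]
        exact L.le_opNorm₂ _ _
    _ = ‖L‖ * ((∫ x, ‖f x‖ ∂μ) * ∫ x, ‖g x‖ ∂μ) := by
        rw [integral_const_mul, integral_convolution _ hf.norm hg.norm,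
          ContinuousLinearMap.mul_apply']

end Integration

section ExponentialTilt

/-- The exponential tilt `t ↦ f(t) e^{zt}` of `f`: the integrand of the Laplace transform of `f`
at `z`. -/
noncomputable def expTilt (f : ℝ → ℝ) (z : ℂ) : ℝ → ℂ :=
  fun t => f t * Complex.exp (z * t)

variable {f : ℝ → ℝ} {z : ℂ}

lemma norm_expTilt_of_re_eq_zero (hz : z.re = 0) (t : ℝ) : ‖expTilt f z t‖ = |f t| := by
  simp [expTilt, Complex.norm_exp, hz]

lemma integrable_expTilt_of_re_eq_zero (hz : z.re = 0) (hf : Integrable f) :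
    Integrable (expTilt f z) := by
  refine hf.ofReal.mul_bdd (c := 1) (Continuous.aestronglyMeasurable (by fun_prop)) ?_
  exact ae_of_all _ fun t => by simp [Complex.norm_exp, hz]

lemma expTilt_add (f g : ℝ → ℝ) (z : ℂ) :
    expTilt (fun t => f t + g t) z = fun t => expTilt f z t + expTilt g z t := by
  ext t
  simp only [expTilt, Complex.ofReal_add, add_mul]

lemma expTilt_comp_neg (f : ℝ → ℝ) (z : ℂ) :
    expTilt (fun t => f (-t)) z = fun t => expTilt f (-z) (-t) := by
  ext t
  simp [expTilt]

lemma expTilt_convolution (f g : ℝ → ℝ) (z : ℂ) :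
    expTilt (f ⋆[ContinuousLinearMap.mul ℝ ℝ] g) z =
      expTilt f z ⋆[ContinuousLinearMap.mul ℝ ℂ] expTilt g z := by
  ext t
  rw [expTilt, convolution_def, convolution_def, ← integral_complex_ofReal, ← integral_mul_const]
  congr 1 with s
  have hexp : Complex.exp (z * t) = Complex.exp (z * s) * Complex.exp (z * (t - s : ℝ)) := by
    rw [← Complex.exp_add, ← mul_add]
    simp
  simp only [ContinuousLinearMap.mul_apply', expTilt, hexp, Complex.ofReal_mul]
  ring

end ExponentialTilt

section MatrixLaplace

variable {D : ℕ} {A B F : ℝ → Matrix (Fin D) (Fin D) ℝ} {z : ℂ}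

/-- Absolute convergence of the Laplace transform of a matrix-valued function at `z`. -/
def LaplaceIntegrable (D : ℕ) (F : ℝ → Matrix (Fin D) (Fin D) ℝ) (z : ℂ) : Prop :=
  ∀ i j, Integrable (expTilt (fun t => F t i j) z)

/-- The matrix of the norms `∫ |F^{ij}(t) e^{zt}| dt`, which extends `kernelNorm` to signed kernels
and to weights other than those on the imaginary axis. -/
noncomputable def laplaceNorm (D : ℕ) (F : ℝ → Matrix (Fin D) (Fin D) ℝ) (z : ℂ) :
    Matrix (Fin D) (Fin D) ℝ :=
  Matrix.of fun i j => ∫ t, ‖expTilt (fun t => F t i j) z t‖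

lemma mlaplace_apply (F : ℝ → Matrix (Fin D) (Fin D) ℝ) (z : ℂ) (i j : Fin D) :
    mlaplace D F z i j = ∫ t, expTilt (fun t => F t i j) z t :=
  rfl

lemma LaplaceIntegrable.add (hA : LaplaceIntegrable D A z) (hB : LaplaceIntegrable D B z) :
    LaplaceIntegrable D (fun t => A t + B t) z := by
  intro i j
  simp only [Matrix.add_apply, expTilt_add]
  exact (hA i j).add (hB i j)

lemma mlaplace_add (hA : LaplaceIntegrable D A z) (hB : LaplaceIntegrable D B z) :
    mlaplace D (fun t => A t + B t) z = mlaplace D A z + mlaplace D B z := by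
  ext i j
  simp only [Matrix.add_apply, mlaplace_apply, expTilt_add]
  exact integral_add (hA i j) (hB i j)

lemma expTilt_mul_left (M : Matrix (Fin D) (Fin D) ℝ) (F : ℝ → Matrix (Fin D) (Fin D) ℝ) (z : ℂ)
    (i j : Fin D) :
    expTilt (fun t => (M * F t) i j) z =
      fun t => ∑ k, (M i k : ℂ) * expTilt (fun t => F t k j) z t := by
  ext t
  simp only [expTilt, Matrix.mul_apply, Complex.ofReal_sum, Complex.ofReal_mul, Finset.sum_mul,
    mul_assoc]

lemma LaplaceIntegrable.mul_left (M : Matrix (Fin D) (Fin D) ℝ) (hF : LaplaceIntegrable D F z) :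
    LaplaceIntegrable D (fun t => M * F t) z := by
  intro i j
  rw [expTilt_mul_left]
  exact integrable_finsetSum _ fun k _ => (hF k j).const_mul _

lemma mlaplace_mul_left (M : Matrix (Fin D) (Fin D) ℝ) (hF : LaplaceIntegrable D F z) :
    mlaplace D (fun t => M * F t) z = M.map Complex.ofReal * mlaplace D F z := by
  ext i j
  rw [mlaplace_apply, expTilt_mul_left, integral_finsetSum _ fun k _ => (hF k j).const_mul _]
  simp only [integral_const_mul, Matrix.mul_apply, Matrix.map_apply, mlaplace_apply]

lemma LaplaceIntegrable.transpose (hF : LaplaceIntegrable D F z) :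
    LaplaceIntegrable D (fun t => (F t)ᵀ) z :=
  fun i j => hF j i

lemma mlaplace_transpose (F : ℝ → Matrix (Fin D) (Fin D) ℝ) (z : ℂ) :
    mlaplace D (fun t => (F t)ᵀ) z = (mlaplace D F z)ᵀ :=
  rfl

lemma LaplaceIntegrable.mul_right (hF : LaplaceIntegrable D F z) (M : Matrix (Fin D) (Fin D) ℝ) :
    LaplaceIntegrable D (fun t => F t * M) z := by
  simpa only [Matrix.transpose_mul, Matrix.transpose_transpose] using
    (hF.transpose.mul_left Mᵀ).transpose

lemma mlaplace_mul_right (hF : LaplaceIntegrable D F z) (M : Matrix (Fin D) (Fin D) ℝ) :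
    mlaplace D (fun t => F t * M) z = mlaplace D F z * M.map Complex.ofReal := by
  have h := congrArg Matrix.transpose (mlaplace_mul_left Mᵀ hF.transpose)
  simpa only [← mlaplace_transpose, Matrix.transpose_mul, Matrix.transpose_transpose,
    Matrix.transpose_map] using h

lemma LaplaceIntegrable.comp_neg (hF : LaplaceIntegrable D F (-z)) :
    LaplaceIntegrable D (fun t => F (-t)) z := by
  intro i j
  rw [expTilt_comp_neg fun t => F t i j]
  exact (hF i j).comp_neg

lemma mlaplace_comp_neg (F : ℝ → Matrix (Fin D) (Fin D) ℝ) (z : ℂ) :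
    mlaplace D (fun t => F (-t)) z = mlaplace D F (-z) := by
  ext i j
  rw [mlaplace_apply, mlaplace_apply, expTilt_comp_neg fun t => F t i j]
  exact integral_neg_eq_self _ _

lemma expTilt_mconv (A B : ℝ → Matrix (Fin D) (Fin D) ℝ) (z : ℂ) (i j : Fin D) :
    expTilt (fun t => mconv D A B t i j) z = fun t => ∑ k,
      (expTilt (fun t => A t i k) z ⋆[ContinuousLinearMap.mul ℝ ℂ]
        expTilt (fun t => B t k j) z) t := by
  ext t
  simp only [← expTilt_convolution]
  simp only [expTilt, mconv, Matrix.of_apply, Complex.ofReal_sum, Finset.sum_mul]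
  rfl

lemma LaplaceIntegrable.mconv (hA : LaplaceIntegrable D A z) (hB : LaplaceIntegrable D B z) :
    LaplaceIntegrable D (mconv D A B) z := by
  intro i j
  rw [expTilt_mconv]
  exact integrable_finsetSum _ fun k _ => (hA i k).integrable_convolution _ (hB k j)

lemma mlaplace_mconv (hA : LaplaceIntegrable D A z) (hB : LaplaceIntegrable D B z) :
    mlaplace D (mconv D A B) z = mlaplace D A z * mlaplace D B z := by
  ext i j
  rw [mlaplace_apply, expTilt_mconv,
    integral_finsetSum _ fun k _ => (hA i k).integrable_convolution _ (hB k j), Matrix.mul_apply]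
  exact Finset.sum_congr rfl fun k _ => integral_convolution _ (hA i k) (hB k j)

lemma laplaceNorm_nonneg (F : ℝ → Matrix (Fin D) (Fin D) ℝ) (z : ℂ) (i j : Fin D) :
    0 ≤ laplaceNorm D F z i j :=
  integral_nonneg fun _ => norm_nonneg _

lemma laplaceNorm_mconv_le (hA : LaplaceIntegrable D A z) (hB : LaplaceIntegrable D B z)
    (i j : Fin D) :
    laplaceNorm D (mconv D A B) z i j ≤ (laplaceNorm D A z * laplaceNorm D B z) i j := by
  have hconv k := (hA i k).integrable_convolution (ContinuousLinearMap.mul ℝ ℂ) (hB k j)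
  calc laplaceNorm D (mconv D A B) z i j
      ≤ ∫ t, ∑ k, ‖(expTilt (fun t => A t i k) z ⋆[ContinuousLinearMap.mul ℝ ℂ]
          expTilt (fun t => B t k j) z) t‖ := by
        rw [laplaceNorm, Matrix.of_apply, expTilt_mconv]
        exact integral_mono (integrable_finsetSum _ fun k _ => hconv k).norm
          (integrable_finsetSum _ fun k _ => (hconv k).norm) fun t => norm_sum_le _ _
    _ ≤ (laplaceNorm D A z * laplaceNorm D B z) i j := by
        rw [integral_finsetSum _ fun k _ => (hconv k).norm, Matrix.mul_apply]
        refine Finset.sum_le_sum fun k _ => ?_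
        simpa using! integral_norm_convolution_le (ContinuousLinearMap.mul ℝ ℂ) (hA i k) (hB k j)

end MatrixLaplace

section NeumannSeries

variable {D : ℕ} {Φ : ℝ → Matrix (Fin D) (Fin D) ℝ} {z : ℂ}

lemma LaplaceIntegrable.mconvIter (hΦ : LaplaceIntegrable D Φ z) :
    ∀ k, LaplaceIntegrable D (mconvIter D Φ k) z
  | 0 => hΦ
  | k + 1 => hΦ.mconv (hΦ.mconvIter k)

lemma mlaplace_mconvIter (hΦ : LaplaceIntegrable D Φ z) (k : ℕ) :
    mlaplace D (mconvIter D Φ k) z = mlaplace D Φ z ^ (k + 1) := by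
  induction k with
  | zero => rw [zero_add, pow_one, mconvIter]
  | succ k ih => rw [mconvIter, mlaplace_mconv hΦ (hΦ.mconvIter k), ih, ← pow_succ']

lemma laplaceNorm_mconvIter_le (hΦ : LaplaceIntegrable D Φ z) (k : ℕ) (i j : Fin D) :
    laplaceNorm D (mconvIter D Φ k) z i j ≤ (laplaceNorm D Φ z ^ (k + 1)) i j := by
  induction k generalizing i j with
  | zero => rw [zero_add, pow_one, mconvIter]
  | succ k ih =>
    calc laplaceNorm D (mconvIter D Φ (k + 1)) z i j
        ≤ (laplaceNorm D Φ z * laplaceNorm D (mconvIter D Φ k) z) i j :=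
          laplaceNorm_mconv_le hΦ (hΦ.mconvIter k) i j
      _ ≤ (laplaceNorm D Φ z * laplaceNorm D Φ z ^ (k + 1)) i j := by
          rw [Matrix.mul_apply, Matrix.mul_apply]
          exact Finset.sum_le_sum fun l _ =>
            mul_le_mul_of_nonneg_left (ih l j) (laplaceNorm_nonneg Φ z i l)
      _ = (laplaceNorm D Φ z ^ (k + 1 + 1)) i j := by rw [← pow_succ']

lemma expTilt_hawkesPsi (D : ℕ) (Φ : ℝ → Matrix (Fin D) (Fin D) ℝ) (z : ℂ) (i j : Fin D) :
    expTilt (fun t => hawkesPsi D Φ t i j) z =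
      fun t => ∑' k, expTilt (fun t => mconvIter D Φ k t i j) z t := by
  ext t
  simp only [expTilt, hawkesPsi, Matrix.of_apply, Complex.ofReal_tsum, tsum_mul_right]

/-- The analogue of hypothesis (H) at a point `z` of the complex plane, for a kernel with entries
of arbitrary sign: the Laplace transform of `Φ` converges absolutely at `z`, and the norms
`∫ |Φ^{ij}(t) e^{zt}| dt` form a matrix of spectral radius less than one. -/
structure IsSubcriticalAt (D : ℕ) (Φ : ℝ → Matrix (Fin D) (Fin D) ℝ) (z : ℂ) : Prop where
  laplaceIntegrable : LaplaceIntegrable D Φ z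
  spectralRadius_lt_one : spectralRadius ℂ ((laplaceNorm D Φ z).map Complex.ofReal) < 1

namespace IsSubcriticalAt

lemma summable_laplaceNorm_mconvIter (hΦ : IsSubcriticalAt D Φ z) (i j : Fin D) :
    Summable fun k => laplaceNorm D (mconvIter D Φ k) z i j :=
  ((summable_nat_add_iff 1).2
    (summable_pow_apply_of_spectralRadius_lt_one hΦ.spectralRadius_lt_one i j)).of_nonneg_of_le
    (fun _ => laplaceNorm_nonneg _ z i j)
    fun k => laplaceNorm_mconvIter_le hΦ.laplaceIntegrable k i j

lemma laplaceIntegrable_hawkesPsi (hΦ : IsSubcriticalAt D Φ z) :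
    LaplaceIntegrable D (hawkesPsi D Φ) z := by
  intro i j
  rw [expTilt_hawkesPsi]
  exact integrable_tsum_of_summable_integral_norm
    (fun k => hΦ.laplaceIntegrable.mconvIter k i j) (hΦ.summable_laplaceNorm_mconvIter i j)

lemma hasSum_mlaplace_pow_succ (hΦ : IsSubcriticalAt D Φ z) :
    HasSum (fun k => mlaplace D Φ z ^ (k + 1)) (mlaplace D (hawkesPsi D Φ) z) := by
  refine Pi.hasSum.2 fun i => Pi.hasSum.2 fun j => ?_
  simp only [← mlaplace_mconvIter hΦ.laplaceIntegrable, mlaplace_apply, expTilt_hawkesPsi]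
  exact hasSum_integral_of_summable_integral_norm
    (fun k => hΦ.laplaceIntegrable.mconvIter k i j) (hΦ.summable_laplaceNorm_mconvIter i j)

lemma one_sub_mul_one_add_mlaplace_hawkesPsi (hΦ : IsSubcriticalAt D Φ z) :
    (1 - mlaplace D Φ z) * (1 + mlaplace D (hawkesPsi D Φ) z) = 1 := by
  have hgeom : HasSum (fun k => mlaplace D Φ z ^ k) (1 + mlaplace D (hawkesPsi D Φ) z) := by
    simpa using hΦ.hasSum_mlaplace_pow_succ.zero_add
  rw [← hgeom.tsum_eq]
  exact hgeom.summable.one_sub_mul_tsum_pow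

end IsSubcriticalAt

end NeumannSeries

section Hawkes

variable {D : ℕ} {Φ : ℝ → Matrix (Fin D) (Fin D) ℝ} {S : Matrix (Fin D) (Fin D) ℝ} {z : ℂ}

lemma laplaceIntegrable_hawkesQ (S : Matrix (Fin D) (Fin D) ℝ)
    (hΨ : LaplaceIntegrable D (hawkesPsi D Φ) (-z)) : LaplaceIntegrable D (hawkesQ D Φ S) z :=
  (hΨ.comp_neg.transpose.mul_left S).mul_right S⁻¹

lemma mlaplace_hawkesQ (S : Matrix (Fin D) (Fin D) ℝ)
    (hΨ : LaplaceIntegrable D (hawkesPsi D Φ) (-z)) :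
    mlaplace D (hawkesQ D Φ S) z =
      S.map Complex.ofReal * (mlaplace D (hawkesPsi D Φ) (-z))ᵀ * (S.map Complex.ofReal)⁻¹ := by
  have hΨT := hΨ.comp_neg.transpose
  calc mlaplace D (hawkesQ D Φ S) z
      = mlaplace D (fun t => S * (hawkesPsi D Φ (-t))ᵀ) z * S⁻¹.map Complex.ofReal :=
        mlaplace_mul_right (hΨT.mul_left S) S⁻¹
    _ = S.map Complex.ofReal * (mlaplace D (hawkesPsi D Φ) (-z))ᵀ * (S.map Complex.ofReal)⁻¹ := by
        rw [mlaplace_mul_left S hΨT, mlaplace_transpose, mlaplace_comp_neg]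
        exact congrArg _ (map_nonsing_inv Complex.ofRealHom S)

lemma one_add_mlaplace_hawkesQ (hS : IsUnit S)
    (hΨ : LaplaceIntegrable D (hawkesPsi D Φ) (-z)) :
    1 + mlaplace D (hawkesQ D Φ S) z =
      S.map Complex.ofReal * (1 + mlaplace D (hawkesPsi D Φ) (-z))ᵀ *
        (S.map Complex.ofReal)⁻¹ := by
  have hSc : IsUnit (S.map Complex.ofReal) := hS.map Complex.ofRealHom.mapMatrix
  rw [mlaplace_hawkesQ S hΨ, transpose_add, transpose_one, mul_add, add_mul, mul_one,
    mul_nonsing_inv _ ((isUnit_iff_isUnit_det _).1 hSc)]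

lemma one_add_mlaplace_hawkesG (hΨ : LaplaceIntegrable D (hawkesPsi D Φ) z)
    (hQ : LaplaceIntegrable D (hawkesQ D Φ S) z) :
    1 + mlaplace D (hawkesG D Φ S) z =
      (1 + mlaplace D (hawkesPsi D Φ) z) * (1 + mlaplace D (hawkesQ D Φ S) z) := by
  have hG : mlaplace D (hawkesG D Φ S) z = mlaplace D (hawkesPsi D Φ) z +
      mlaplace D (hawkesQ D Φ S) z +
        mlaplace D (hawkesPsi D Φ) z * mlaplace D (hawkesQ D Φ S) z := by
    rw [← mlaplace_mconv hΨ hQ, ← mlaplace_add hΨ hQ]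
    exact mlaplace_add (hΨ.add hQ) (hΨ.mconv hQ)
  rw [hG]
  noncomm_ring

theorem hawkesG_laplace_inverse_general (hΦ : IsSubcriticalAt D Φ z)
    (hΦneg : IsSubcriticalAt D Φ (-z)) (hS : IsUnit S) :
    IsUnit (1 + mlaplace D (hawkesG D Φ S) z) ∧
      (1 + mlaplace D (hawkesG D Φ S) z)⁻¹ =
        S.map Complex.ofReal * (1 - (mlaplace D Φ (-z))ᵀ) * (S.map Complex.ofReal)⁻¹ *
          (1 - mlaplace D Φ z) := by
  have hΨneg := hΦneg.laplaceIntegrable_hawkesPsi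
  have hPsi := hΦ.one_sub_mul_one_add_mlaplace_hawkesPsi
  have hPsi_neg := hΦneg.one_sub_mul_one_add_mlaplace_hawkesPsi
  have hSc : IsUnit (S.map Complex.ofReal) := hS.map Complex.ofRealHom.mapMatrix
  rw [one_add_mlaplace_hawkesG hΦ.laplaceIntegrable_hawkesPsi (laplaceIntegrable_hawkesQ S hΨneg),
    one_add_mlaplace_hawkesQ hS hΨneg]
  constructor
  · exact (IsUnit.of_mul_eq_one_right _ hPsi).mul
      ((hSc.mul ((isUnit_transpose _).2 (IsUnit.of_mul_eq_one_right _ hPsi_neg))).mul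
        (isUnit_nonsing_inv_iff.2 hSc))
  · rw [Matrix.mul_inv_rev, Matrix.mul_inv_rev, Matrix.mul_inv_rev, ← transpose_nonsing_inv,
      nonsing_inv_nonsing_inv _ ((isUnit_iff_isUnit_det _).1 hSc), inv_eq_left_inv hPsi,
      inv_eq_left_inv hPsi_neg, transpose_sub, transpose_one, ← mul_assoc]

lemma laplaceNorm_eq_kernelNorm (hz : z.re = 0) (hΦ : ∀ t i j, 0 ≤ Φ t i j) :
    laplaceNorm D Φ z = kernelNorm D Φ := by
  ext i j
  simp only [laplaceNorm, kernelNorm, Matrix.of_apply, norm_expTilt_of_re_eq_zero hz,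
    abs_of_nonneg (hΦ _ i j)]

lemma IsHawkesKernel.isSubcriticalAt (hΦ : IsHawkesKernel D Φ) (hH : HypothesisH D Φ)
    (hz : z.re = 0) : IsSubcriticalAt D Φ z := by
  obtain ⟨-, hnonneg, hint, -⟩ := hΦ
  refine ⟨fun i j => integrable_expTilt_of_re_eq_zero hz (hint i j), ?_⟩
  rwa [laplaceNorm_eq_kernelNorm hz hnonneg]

end Hawkes

/-- On the imaginary axis, `I + ĝ(z)` is invertible with inverse
`Σ (I - Φ̂(-z)ᵀ) Σ⁻¹ (I - Φ̂(z))`. -/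
theorem hawkesG_laplace_inverse (D : ℕ) (hD : 0 < D)
    (Φ : ℝ → Matrix (Fin D) (Fin D) ℝ)
    (hΦ : IsHawkesKernel D Φ) (hH : HypothesisH D Φ)
    (S : Matrix (Fin D) (Fin D) ℝ) (hSdiag : S.IsDiag) (hSpos : ∀ i, 0 < S i i) :
    ∀ z : ℂ, z.re = 0 →
      IsUnit (1 + mlaplace D (hawkesG D Φ S) z) ∧
      (1 + mlaplace D (hawkesG D Φ S) z)⁻¹ =
        S.map Complex.ofReal * (1 - (mlaplace D Φ (-z))ᵀ) * (S.map Complex.ofReal)⁻¹ *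
          (1 - mlaplace D Φ z) := by
  intro z hz
  exact hawkesG_laplace_inverse_general (hΦ.isSubcriticalAt hH hz)
    (hΦ.isSubcriticalAt hH (by simp [hz])) (isUnit_of_isDiag hSdiag fun i => (hSpos i).ne')
end

section
/- Let l ≥ 0 be an integer and β ∈ (l, l+1]. Let g : ℝ → ℝ be of class C^l with its l-th derivative (β−l)-Hölder continuous with constant L (so for l = 0, g is β-Hölder with constant L). Let K : ℝ → ℝ be integrable with ∫_ℝ K(u) du = 1, ∫_ℝ u^n K(u) du = 0 for every integer 1 ≤ n ≤ l, and ∫_ℝ |u|^β |K(u)| du < ∞. Then for every t ∈ ℝ and every h > 0, the smoothing bias satisfies |∫_ℝ (g(t + uh) − g(t)) K(u) du| ≤ (L/l!) h^β ∫_ℝ |u|^β |K(u)| du. In particular the bias is O(h^β) as h → 0. -/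
open MeasureTheory

/-!
Taylor's theorem bounds the distance from `g (t + u * h)` to the Taylor polynomial of order `l` at
`t` by `L / l! * |u * h| ^ β`: the Hölder condition controls how far the top-order coefficient is
from the `l`-th derivative at nearby points. As a function of `u`, that polynomial minus `g t` is a
combination of `u, …, u ^ l`, which `K` integrates to zero, so only the remainder contributes.
-/

open Set
open scoped Nat

variable {E : Type*} [NormedAddCommGroup E] [NormedSpace ℝ E]

section Taylor

variable {f : ℝ → E} {s : Set ℝ} {t x : ℝ} {n : ℕ}

lemma norm_image_sub_le_of_norm_hasDerivWithin_le_mul_pow {f' : ℝ → E} {C : ℝ}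
    (hf : ∀ y ∈ uIcc t x, HasDerivWithinAt f (f' y) (uIcc t x) y)
    (bound : ∀ y ∈ uIcc t x, ‖f' y‖ ≤ C * |y - t| ^ n) :
    ‖f x - f t‖ ≤ C * |x - t| ^ (n + 1) / (n + 1) := by
  -- Running from `t` to `x` along `[0, 1]` covers `t ≤ x` and `x ≤ t` at once.
  let γ : ℝ → ℝ := fun r => t + r * (x - t)
  have γ_mem : MapsTo γ (Icc 0 1) (uIcc t x) := fun r hr => by
    rw [← segment_eq_uIcc, segment_eq_image']
    exact ⟨r, hr, rfl⟩
  have hγ (r : ℝ) : HasDerivAt γ (x - t) r := (hasDerivAt_mul_const (x - t)).const_add t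
  have hfγ (r : ℝ) (hr : r ∈ Icc (0 : ℝ) 1) :
      HasDerivWithinAt (fun r => f (γ r) - f t) ((x - t) • f' (γ r)) (Icc 0 1) r :=
    ((hf _ (γ_mem hr)).scomp r (hγ r).hasDerivWithinAt γ_mem).sub_const (f t)
  have hB (r : ℝ) : HasDerivAt (fun r => C * |x - t| ^ (n + 1) / (n + 1) * r ^ (n + 1))
      (C * |x - t| ^ (n + 1) * r ^ n) r := by
    refine ((hasDerivAt_pow (n + 1) r).const_mul _).congr_deriv ?_
    push_cast
    field_simp
  have bound_γ (r : ℝ) (hr : r ∈ Ico (0 : ℝ) 1) :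
      ‖(x - t) • f' (γ r)‖ ≤ C * |x - t| ^ (n + 1) * r ^ n :=
    calc ‖(x - t) • f' (γ r)‖ = |x - t| * ‖f' (γ r)‖ := by rw [norm_smul, Real.norm_eq_abs]
      _ ≤ |x - t| * (C * |γ r - t| ^ n) := by
        gcongr
        exact bound _ (γ_mem (Ico_subset_Icc_self hr))
      _ = C * |x - t| ^ (n + 1) * r ^ n := by
        rw [add_sub_cancel_left, abs_mul, abs_of_nonneg hr.1]
        ring
  simpa [γ] using image_norm_le_of_norm_deriv_right_le_deriv_boundary
    (fun r hr => (hfγ r hr).continuousWithinAt)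
    (fun r hr => (hfγ r (Ico_subset_Icc_self hr)).mono_of_mem_nhdsWithin (Icc_mem_nhdsGE_of_mem hr))
    (by simp [γ]) hB bound_γ (right_mem_Icc.2 zero_le_one)

theorem norm_sub_taylorWithinEval_le_of_norm_iteratedDerivWithin_sub_le {C : ℝ}
    (hs : UniqueDiffOn ℝ s) (hts : uIcc t x ⊆ s) (hf : ContDiffOn ℝ n f s)
    (bound : ∀ y ∈ uIcc t x, ‖iteratedDerivWithin n f s y - iteratedDerivWithin n f s t‖ ≤ C) :
    ‖f x - taylorWithinEval f n s t x‖ ≤ C * |x - t| ^ n / n ! := by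
  induction n generalizing f x with
  | zero => simpa using bound x right_mem_uIcc
  | succ n ih =>
    have deriv_remainder_le (y : ℝ) (hy : y ∈ uIcc t x) :
        ‖derivWithin f s y - taylorWithinEval (derivWithin f s) n s t y‖
          ≤ C / n ! * |y - t| ^ n := by
      have hyx : uIcc t y ⊆ uIcc t x := uIcc_subset_uIcc_left hy
      rw [div_mul_eq_mul_div]
      refine ih (hyx.trans hts) (hf.derivWithin hs le_rfl) fun z hz => ?_
      simpa only [iteratedDerivWithin_succ'] using bound z (hyx hz)
    have hasDeriv_remainder (y : ℝ) (hy : y ∈ uIcc t x) :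
        HasDerivWithinAt (fun y => f y - taylorWithinEval f (n + 1) s t y)
          (derivWithin f s y - taylorWithinEval (derivWithin f s) n s t y) (uIcc t x) y :=
      ((hf.differentiableOn (by simp) y (hts hy)).hasDerivWithinAt.mono hts).sub
        (hasDerivAt_taylorWithinEval_succ f n).hasDerivWithinAt
    calc ‖f x - taylorWithinEval f (n + 1) s t x‖
        ≤ C / n ! * |x - t| ^ (n + 1) / (n + 1) := by
          simpa using norm_image_sub_le_of_norm_hasDerivWithin_le_mul_pow
            hasDeriv_remainder deriv_remainder_le
      _ = C * |x - t| ^ (n + 1) / (n + 1)! := by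
          rw [Nat.factorial_succ]
          push_cast
          field_simp

theorem norm_sub_taylorWithinEval_le_of_holder {C α : ℝ} (hC : 0 ≤ C) (hα : 0 ≤ α)
    (hs : UniqueDiffOn ℝ s) (hts : uIcc t x ⊆ s) (hf : ContDiffOn ℝ n f s)
    (holder : ∀ y ∈ uIcc t x,
      ‖iteratedDerivWithin n f s y - iteratedDerivWithin n f s t‖ ≤ C * |y - t| ^ α) :
    ‖f x - taylorWithinEval f n s t x‖ ≤ C / n ! * |x - t| ^ (n + α) := by
  have bound (y : ℝ) (hy : y ∈ uIcc t x) :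
      ‖iteratedDerivWithin n f s y - iteratedDerivWithin n f s t‖ ≤ C * |x - t| ^ α := by
    refine (holder y hy).trans ?_
    gcongr C * ?_ ^ α
    exact abs_sub_left_of_mem_uIcc hy
  calc ‖f x - taylorWithinEval f n s t x‖
      ≤ C * |x - t| ^ α * |x - t| ^ n / n ! :=
        norm_sub_taylorWithinEval_le_of_norm_iteratedDerivWithin_sub_le hs hts hf bound
    _ = C / n ! * |x - t| ^ (n + α) := by
        rw [Real.rpow_add_of_nonneg (abs_nonneg _) n.cast_nonneg hα, Real.rpow_natCast]
        ring

lemma taylorWithinEval_sub_self (f : ℝ → E) (n : ℕ) (s : Set ℝ) (t x : ℝ) :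
    taylorWithinEval f n s t x - f t =
      ∑ k ∈ Finset.Icc 1 n, (x - t) ^ k • taylorCoeffWithin f k s t := by
  rw [taylor_within_apply, Finset.range_eq_Ico, Finset.sum_eq_sum_Ico_succ_bot n.succ_pos]
  simp [taylorCoeffWithin, smul_smul, mul_comm, Finset.Ico_add_one_right_eq_Icc]

end Taylor

section Moments

variable {μ : Measure ℝ} {K : ℝ → ℝ}

lemma pow_le_one_add_rpow {x q : ℝ} {n : ℕ} (hx : 0 ≤ x) (hnq : n ≤ q) : x ^ n ≤ 1 + x ^ q := by
  rcases le_total x 1 with hx1 | hx1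
  · exact (pow_le_one₀ hx hx1).trans (le_add_of_nonneg_right (Real.rpow_nonneg hx q))
  · calc x ^ n = x ^ (n : ℝ) := (Real.rpow_natCast x n).symm
      _ ≤ x ^ q := Real.rpow_le_rpow_of_exponent_le hx1 hnq
      _ ≤ 1 + x ^ q := le_add_of_nonneg_left zero_le_one

lemma integrable_pow_mul_of_integrable_abs_rpow_mul {q : ℝ} {n : ℕ} (hnq : n ≤ q)
    (hK : Integrable K μ) (hKq : Integrable (fun u => |u| ^ q * |K u|) μ) :
    Integrable (fun u => u ^ n * K u) μ := by
  refine (hK.abs.add hKq).mono'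
    ((continuous_pow n).aestronglyMeasurable.mul hK.aestronglyMeasurable) (.of_forall fun u => ?_)
  calc ‖u ^ n * K u‖ = |u| ^ n * |K u| := by
        simp only [norm_mul, norm_pow, Real.norm_eq_abs]
    _ ≤ (1 + |u| ^ q) * |K u| := by
        gcongr
        exact pow_le_one_add_rpow (abs_nonneg u) hnq
    _ = |K u| + |u| ^ q * |K u| := by ring

lemma integrable_smul_sum_pow_smul {S : Finset ℕ}
    (hint : ∀ n ∈ S, Integrable (fun u => u ^ n * K u) μ) (c : ℕ → E) :
    Integrable (fun u => K u • ∑ n ∈ S, u ^ n • c n) μ := by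
  simp only [Finset.smul_sum, smul_smul, mul_comm (K _)]
  exact integrable_finsetSum _ fun n hn => (hint n hn).smul_const (c n)

lemma integral_smul_sum_pow_smul_eq_zero [CompleteSpace E] {S : Finset ℕ}
    (hint : ∀ n ∈ S, Integrable (fun u => u ^ n * K u) μ)
    (hKmom : ∀ n ∈ S, ∫ u, u ^ n * K u ∂μ = 0) (c : ℕ → E) :
    ∫ u, K u • ∑ n ∈ S, u ^ n • c n ∂μ = 0 := by
  simp only [Finset.smul_sum, smul_smul, mul_comm (K _)]
  rw [integral_finsetSum _ fun n hn => (hint n hn).smul_const (c n)]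
  refine Finset.sum_eq_zero fun n hn => ?_
  rw [integral_smul_const, hKmom n hn, zero_smul]

theorem norm_integral_smul_le_of_norm_sub_sum_pow_smul_le [CompleteSpace E] {S : Finset ℕ}
    {q C : ℝ} {f : ℝ → E} {c : ℕ → E} (hSq : ∀ n ∈ S, n ≤ q) (hK : Integrable K μ)
    (hKmom : ∀ n ∈ S, ∫ u, u ^ n * K u ∂μ = 0)
    (hKq : Integrable (fun u => |u| ^ q * |K u|) μ) (hf : AEStronglyMeasurable f μ)
    (approx : ∀ u, ‖f u - ∑ n ∈ S, u ^ n • c n‖ ≤ C * |u| ^ q) :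
    ‖∫ u, K u • f u ∂μ‖ ≤ C * ∫ u, |u| ^ q * |K u| ∂μ := by
  let P : ℝ → E := fun u => ∑ n ∈ S, u ^ n • c n
  have hint (n : ℕ) (hn : n ∈ S) : Integrable (fun u => u ^ n * K u) μ :=
    integrable_pow_mul_of_integrable_abs_rpow_mul (hSq n hn) hK hKq
  have norm_remainder_le (u : ℝ) : ‖K u • (f u - P u)‖ ≤ C * (|u| ^ q * |K u|) :=
    calc ‖K u • (f u - P u)‖ = |K u| * ‖f u - P u‖ := by rw [norm_smul, Real.norm_eq_abs]
      _ ≤ |K u| * (C * |u| ^ q) := by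
        gcongr
        exact approx u
      _ = C * (|u| ^ q * |K u|) := by ring
  have integrable_remainder : Integrable (fun u => K u • (f u - P u)) μ := by
    have hP : Continuous P := by fun_prop
    exact (hKq.const_mul C).mono'
      (hK.aestronglyMeasurable.smul (hf.sub hP.aestronglyMeasurable)) (.of_forall norm_remainder_le)
  have integral_eq_remainder : ∫ u, K u • f u ∂μ = ∫ u, K u • (f u - P u) ∂μ :=
    calc ∫ u, K u • f u ∂μ = ∫ u, K u • (f u - P u) + K u • P u ∂μ := by
          simp only [← smul_add, sub_add_cancel]
      _ = ∫ u, K u • (f u - P u) ∂μ := by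
          rw [integral_add integrable_remainder (integrable_smul_sum_pow_smul hint c),
            integral_smul_sum_pow_smul_eq_zero hint hKmom c, add_zero]
  rw [integral_eq_remainder, ← integral_const_mul]
  exact norm_integral_le_of_norm_le (hKq.const_mul C) (.of_forall norm_remainder_le)

end Moments

theorem kernel_smoothing_bias_general [CompleteSpace E] {μ : Measure ℝ} {l : ℕ} {β L t : ℝ}
    (hβ : l ≤ β) (hL : 0 ≤ L) {g : ℝ → E} {K : ℝ → ℝ} (hg : ContDiff ℝ l g)
    (hHolder : ∀ x, ‖iteratedDeriv l g x - iteratedDeriv l g t‖ ≤ L * |x - t| ^ (β - l))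
    (hK : Integrable K μ) (hKmom : ∀ n, 1 ≤ n → n ≤ l → ∫ u, u ^ n * K u ∂μ = 0)
    (hKβ : Integrable (fun u => |u| ^ β * |K u|) μ) (h : ℝ) :
    ‖∫ u, K u • (g (t + u * h) - g t) ∂μ‖ ≤ L / l ! * |h| ^ β * ∫ u, |u| ^ β * |K u| ∂μ := by
  let c : ℕ → E := fun n => h ^ n • taylorCoeffWithin g n univ t
  have taylor_eq (u : ℝ) : taylorWithinEval g l univ t (t + u * h) - g t =
      ∑ n ∈ Finset.Icc 1 l, u ^ n • c n := by
    simp only [taylorWithinEval_sub_self, add_sub_cancel_left, mul_pow, mul_smul, c]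
  have taylor_approx (u : ℝ) : ‖g (t + u * h) - g t - ∑ n ∈ Finset.Icc 1 l, u ^ n • c n‖
      ≤ L / l ! * |h| ^ β * |u| ^ β :=
    calc ‖g (t + u * h) - g t - ∑ n ∈ Finset.Icc 1 l, u ^ n • c n‖
        = ‖g (t + u * h) - taylorWithinEval g l univ t (t + u * h)‖ := by
          rw [← taylor_eq, sub_sub_sub_cancel_right]
      _ ≤ L / l ! * |t + u * h - t| ^ (l + (β - l)) :=
          norm_sub_taylorWithinEval_le_of_holder hL (sub_nonneg.2 hβ) uniqueDiffOn_univ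
            (subset_univ _) hg.contDiffOn fun y _ => by simpa using hHolder y
      _ = L / l ! * |h| ^ β * |u| ^ β := by
          rw [add_sub_cancel_left, add_sub_cancel, abs_mul,
            Real.mul_rpow (abs_nonneg u) (abs_nonneg h)]
          ring
  have hg_cont : Continuous g := hg.continuous
  exact norm_integral_smul_le_of_norm_sub_sum_pow_smul_le
    (fun n hn => (Nat.cast_le.2 (Finset.mem_Icc.1 hn).2).trans hβ) hK
    (fun n hn => hKmom n (Finset.mem_Icc.1 hn).1 (Finset.mem_Icc.1 hn).2) hKβ
    (Continuous.aestronglyMeasurable (by fun_prop)) taylor_approx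

/-- Bias of kernel smoothing: if `g` is `C^l` with `(β - l)`-Hölder `l`-th
derivative (constant `L`), `β ∈ (l, l+1]`, and `K` is a kernel of order `l` with finite
`β`-moment, then for every `t` and `h > 0`,
`|∫ (g(t + uh) - g(t)) K(u) du| ≤ (L / l!) h^β ∫ |u|^β |K(u)| du`. -/
theorem kernel_smoothing_bias (l : ℕ) (β L : ℝ)
    (hβl : (l : ℝ) < β) (hβu : β ≤ (l : ℝ) + 1) (hL : 0 ≤ L)
    (g K : ℝ → ℝ)
    (hg : ContDiff ℝ (l : ℕ∞) g)
    (hHolder : ∀ x y : ℝ,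
      |iteratedDeriv l g x - iteratedDeriv l g y| ≤ L * |x - y| ^ (β - (l : ℝ)))
    (hK : Integrable K)
    (hK1 : (∫ u : ℝ, K u) = 1)
    (hKmom : ∀ n : ℕ, 1 ≤ n → n ≤ l → (∫ u : ℝ, u ^ n * K u) = 0)
    (hKβ : Integrable fun u : ℝ => |u| ^ β * |K u|) :
    ∀ t : ℝ, ∀ h : ℝ, 0 < h →
      |∫ u : ℝ, (g (t + u * h) - g t) * K u| ≤
        (L / Nat.factorial l) * h ^ β * ∫ u : ℝ, |u| ^ β * |K u| := by
  intro t h hh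
  simpa only [smul_eq_mul, mul_comm (K _), Real.norm_eq_abs, abs_of_pos hh] using
    kernel_smoothing_bias_general hβl.le hL hg (hHolder · t) hK hKmom hKβ h
end
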